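/- Let $a > 0$ and let $j : \mathbb{R} \to \mathbb{R}$ be twice differentiable on $[0,\infty)$, satisfying $j''(t) \le a^2 j(t)$ for all $t \ge 0$ and $\lim_{t \to \infty} j(t) = 0$. Then $j(t) \ge j(0)\, e^{-a t}$ for all $t \ge 0$. -/

import Mathlib

/-- Monotonicity from a nonnegative derivative on a half line. -/
lemma aux_mono (s : ℝ) (f f' : ℝ → ℝ) (hf : ∀ t, s ≤ t → HasDerivAt f (f' t) t)
    (h : ∀ t, s ≤ t → 0 ≤ f' t) (t : ℝ) (ht : s ≤ t) : f s ≤ f t := by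
  have hm : MonotoneOn f (Set.Ici s) := by
    apply monotoneOn_of_deriv_nonneg (convex_Ici s)
    · intro x hx
      exact (hf x hx).continuousAt.continuousWithinAt
    · intro x hx
      rw [interior_Ici] at hx
      exact (hf x (le_of_lt hx)).differentiableAt.differentiableWithinAt
    · intro x hx
      rw [interior_Ici] at hx
      rw [(hf x (le_of_lt hx)).deriv]
      exact h x (le_of_lt hx)
  exact hm (Set.mem_Ici.2 le_rfl) ht ht

/-- Scalar analogue of inequality (1): if `j'' ≤ a² j` on `[0,∞)` and `j(t) → 0`
as `t → ∞`, then `j(t) ≥ j(0) e^{-a t}` for all `t ≥ 0`. -/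
theorem stmt_5 (a : ℝ) (ha : 0 < a) (j j' j'' : ℝ → ℝ)
    (hj' : ∀ t, 0 ≤ t → HasDerivAt j (j' t) t)
    (hj'' : ∀ t, 0 ≤ t → HasDerivAt j' (j'' t) t)
    (hineq : ∀ t, 0 ≤ t → j'' t ≤ a ^ 2 * j t)
    (hlim : Filter.Tendsto j Filter.atTop (nhds 0)) :
    ∀ t, 0 ≤ t → j 0 * Real.exp (-a * t) ≤ j t := by
  have hexp : ∀ b t : ℝ, HasDerivAt (fun x => Real.exp (b * x)) (Real.exp (b * t) * b) t := by
    intro b t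
    simpa using ((hasDerivAt_id t).const_mul b).exp
  have hee : ∀ t : ℝ, Real.exp (a * t) * Real.exp (-a * t) = 1 := by
    intro t
    rw [← Real.exp_add]; simp
  have hw : ∀ s, 0 ≤ s → 0 ≤ j' s + a * j s := by
    intro s hs
    by_contra hneg
    push Not at hneg
    obtain ⟨c, hc⟩ : ∃ c, c = -(j' s + a * j s) := ⟨_, rfl⟩
    have hcpos : 0 < c := by linarith
    have hle : ∀ t, s ≤ t → j' t + a * j t ≤ -c := by
      intro t ht
      have h1 := aux_mono s (fun x => -((j' x + a * j x) * Real.exp (-a * x)))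
        (fun x => -((j'' x + a * j' x) * Real.exp (-a * x)
          + (j' x + a * j x) * (Real.exp (-a * x) * (-a))))
        (fun x hx => (((hj'' x (hs.trans hx)).add ((hj' x (hs.trans hx)).const_mul a)).mul
          (hexp (-a) x)).neg)
        (fun x hx => by
          have := mul_nonneg (sub_nonneg.2 (hineq x (hs.trans hx))) (Real.exp_pos (-a * x)).le
          nlinarith) t ht
      have h2 : Real.exp (-a * t) ≤ Real.exp (-a * s) := by
        apply Real.exp_le_exp.2; nlinarith
      have h3 : (j' t + a * j t) * Real.exp (-a * t) ≤ -c * Real.exp (-a * t) := by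
        have : j' s + a * j s = -c := by linarith
        rw [this] at h1
        nlinarith
      exact le_of_mul_le_mul_right h3 (Real.exp_pos _)
    have hK : ∀ t, s ≤ t → (j t + c / a) * Real.exp (a * t) ≤ (j s + c / a) * Real.exp (a * s) := by
      intro t ht
      have h1 := aux_mono s (fun x => -((j x + c / a) * Real.exp (a * x)))
        (fun x => -(j' x * Real.exp (a * x) + (j x + c / a) * (Real.exp (a * x) * a)))
        (fun x hx => (((hj' x (hs.trans hx)).add_const (c / a)).mul (hexp a x)).neg)
        (fun x hx => by
          have h2 := mul_nonneg (sub_nonneg.2 (hle x hx)) (Real.exp_pos (a * x)).le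
          have h3 : -(j' x * Real.exp (a * x) + (j x + c / a) * (Real.exp (a * x) * a))
            = (-c - (j' x + a * j x)) * Real.exp (a * x) := by
            field_simp; ring
          rw [h3]; exact h2) t ht
      linarith
    have hl : Filter.Tendsto (fun t => (j t + c / a) * Real.exp (a * t)) Filter.atTop
        Filter.atTop := by
      refine Filter.Tendsto.pos_mul_atTop (C := 0 + c / a) (by positivity) (hlim.add_const _) ?_
      exact Real.tendsto_exp_atTop.comp (Filter.tendsto_id.const_mul_atTop ha)
    obtain ⟨t, ht1, ht2⟩ := ((hl.eventually_gt_atTop ((j s + c / a) * Real.exp (a * s))).and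
      (Filter.eventually_ge_atTop s)).exists
    linarith [hK t ht2]
  intro t ht
  have h1 := aux_mono 0 (fun x => j x * Real.exp (a * x))
    (fun x => j' x * Real.exp (a * x) + j x * (Real.exp (a * x) * a))
    (fun x hx => (hj' x hx).mul (hexp a x))
    (fun x hx => by
      have := mul_nonneg (hw x hx) (Real.exp_pos (a * x)).le
      nlinarith) t ht
  simp only [mul_zero, Real.exp_zero, mul_one] at h1
  calc j 0 * Real.exp (-a * t) ≤ j t * Real.exp (a * t) * Real.exp (-a * t) :=
        mul_le_mul_of_nonneg_right h1 (Real.exp_pos _).le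
    _ = j t := by rw [mul_assoc, hee, mul_one]
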